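/- Let (g,J,ω,α) be a Frobenius–Kähler structure on the real Lie algebra (𝔤,[·,·]) (so ω(x,y) = α([x,y]) = g(x,Jy)), and let D ∈ Der(𝔤) satisfy α∘D = 0, α∘J∘D = 0, and D∘J = J∘D. Let 𝔤(D) = ℝξ ⋉ 𝔤 be the extension of 𝔤 by D, with [ξ,x] = D(x) for x ∈ 𝔤. Define ᾱ ∈ 𝔤(D)* by ᾱ|_𝔤 = α and ᾱ(ξ) = 1, and define Φ ∈ End(𝔤(D)) by Φ(x) = J(x) − α(J(x))·ξ for x ∈ 𝔤 and Φ(ξ) = 0. Then: (i) Φ∘Φ = −Id + ᾱ⊗ξ; (ii) N_Φ = −dᾱ⊗ξ; (iii) dᾱ(ξ,·) = 0 and the restriction of dᾱ to Ker(ᾱ) is nondegenerate (so ᾱ is a contact form on 𝔤(D) with Reeb vector ξ). Hence 𝔤(D), with a suitable adapted metric, is a Sasakian Lie algebra. -/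

import Mathlib

/-- The Nijenhuis tensor of a linear endomorphism `F` of a real Lie algebra:
`N_F(x,y) = F²([x,y]) + [Fx,Fy] − F([x,Fy]) − F([Fx,y])`. -/
def nijenhuis {L : Type*} [LieRing L] [LieAlgebra ℝ L] (F : L →ₗ[ℝ] L) (x y : L) : L :=
  F (F ⁅x, y⁆) + ⁅F x, F y⁆ - F ⁅x, F y⁆ - F ⁅F x, y⁆

/-!
The Nijenhuis tensor of `Φ` and the Kirillov form of `ᾱ` are alternating, so they are determined by
their values on `𝔤 × 𝔤` and on `ξ × 𝔤`.  Since `D` commutes with `J` and `α ∘ J ∘ D = 0`, all terms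
containing `D` cancel on `𝔤 × 𝔤` and leave
`N_Φ(x, y) = N_J(x, y) + (α[Jx, Jy] - α(N_J(x, y))) ξ`;
integrability of `J` and `J`-invariance of `α[·,·]` turn the right-hand side into `α[x, y] ξ`.
As `α ∘ D = 0`, the vector `ξ` lies in the radical of `ᾱ[·,·]`, and the radical is exactly the line
through `ξ` because `α[·,·]` is nondegenerate; this line meets `Ker ᾱ` trivially.
-/

section BilinearMaps

variable {R L : Type*} [CommRing R] [LieRing L] [LieAlgebra R L]

/-- The Nijenhuis tensor of an endomorphism of a Lie algebra over any commutative ring, as a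
bilinear map; over `ℝ` its values are those of `nijenhuis`. -/
def nijenhuisTensor (F : L →ₗ[R] L) : L →ₗ[R] L →ₗ[R] L :=
  let bracket : L →ₗ[R] L →ₗ[R] L := LieAlgebra.ad R L
  bracket.compr₂ (F ∘ₗ F) + bracket.compl₁₂ F F - (bracket.compl₂ F).compr₂ F
    - (bracket ∘ₗ F).compr₂ F

lemma nijenhuisTensor_apply (F : L →ₗ[R] L) (x y : L) :
    nijenhuisTensor F x y = F (F ⁅x, y⁆) + ⁅F x, F y⁆ - F ⁅x, F y⁆ - F ⁅F x, y⁆ :=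
  rfl

lemma nijenhuisTensor_isAlt (F : L →ₗ[R] L) : (nijenhuisTensor F).IsAlt := fun x => by
  rw [nijenhuisTensor_apply, lie_self, lie_self, ← lie_skew x (F x), map_neg, map_zero, map_zero]
  abel

/-- The Kirillov form `(x, y) ↦ α [x, y]` of a linear form `α` on a Lie algebra, that is, `-dα`. -/
def kirillovForm (α : L →ₗ[R] R) : L →ₗ[R] L →ₗ[R] R :=
  (LieAlgebra.ad R L : L →ₗ[R] L →ₗ[R] L).compr₂ α

lemma kirillovForm_apply (α : L →ₗ[R] R) (x y : L) : kirillovForm α x y = α ⁅x, y⁆ :=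
  rfl

lemma kirillovForm_isAlt (α : L →ₗ[R] R) : (kirillovForm α).IsAlt := fun x => by
  rw [kirillovForm_apply, lie_self, map_zero]

end BilinearMaps

lemma map_map_eq_of_skew_of_sq_eq_neg {R M N : Type*} [CommRing R] [AddCommGroup M] [Module R M]
    [AddCommGroup N] [Module R N] {g : M →ₗ[R] M →ₗ[R] N} {J : M →ₗ[R] M}
    (hJ : ∀ x, J (J x) = -x) (hgJ : ∀ x y, g (J x) y + g x (J y) = 0) (x y : M) :
    g (J x) (J y) = g x y := by
  rw [eq_neg_of_add_eq_zero_left (hgJ x (J y)), hJ, map_neg, neg_neg]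

/-- `E` is the semidirect sum `Rξ ⋉ G` in which `ξ` acts on `G`, embedded by `i`, as `D`.  The
extension is described inside an arbitrary Lie algebra `E` rather than constructed on `G × R`. -/
structure IsExtensionBy {R G E : Type*} [CommRing R] [LieRing G] [LieAlgebra R G] [LieRing E]
    [LieAlgebra R E] (D : G →ₗ[R] G) (i : G →ₗ⁅R⁆ E) (ξ : E) : Prop where
  existsUnique_eq_add_smul : ∀ v : E, ∃! p : G × R, v = i p.1 + p.2 • ξ
  lie_apply : ∀ x : G, ⁅ξ, i x⁆ = i (D x)

namespace IsExtensionBy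

variable {R G E M : Type*} [CommRing R] [LieRing G] [LieAlgebra R G] [LieRing E] [LieAlgebra R E]
  [AddCommGroup M] [Module R M] {D J : G →ₗ[R] G} {i : G →ₗ⁅R⁆ E} {ξ : E} {α : G →ₗ[R] R}
  {αE : E →ₗ[R] R} {Φ : E →ₗ[R] E}

lemma exists_eq_add_smul (h : IsExtensionBy D i ξ) (v : E) :
    ∃ (x : G) (s : R), v = i x + s • ξ := by
  obtain ⟨⟨x, s⟩, hv, -⟩ := h.existsUnique_eq_add_smul v
  exact ⟨x, s, hv⟩

lemma linearMap_ext (h : IsExtensionBy D i ξ) {f f' : E →ₗ[R] M} (hG : ∀ x, f (i x) = f' (i x))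
    (hξ : f ξ = f' ξ) : f = f' := by
  ext v
  obtain ⟨x, s, rfl⟩ := h.exists_eq_add_smul v
  rw [map_add, map_add, map_smul, map_smul, hG, hξ]

lemma isAlt_ext (h : IsExtensionBy D i ξ) {B B' : E →ₗ[R] E →ₗ[R] M} (hB : B.IsAlt)
    (hB' : B'.IsAlt) (hG : ∀ x y, B (i x) (i y) = B' (i x) (i y))
    (hξ : ∀ x, B ξ (i x) = B' ξ (i x)) : B = B' := by
  refine h.linearMap_ext (fun x => h.linearMap_ext (hG x) ?_) (h.linearMap_ext hξ ?_)
  · rw [← hB.neg, ← hB'.neg, hξ]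
  · rw [hB, hB']

lemma apply_apply_eq_neg_add_smul (h : IsExtensionBy D i ξ) (hJ : ∀ x, J (J x) = -x)
    (hα : ∀ x, αE (i x) = α x) (hαξ : αE ξ = 1) (hΦ : ∀ x, Φ (i x) = i (J x) - α (J x) • ξ)
    (hΦξ : Φ ξ = 0) (v : E) : Φ (Φ v) = -v + αE v • ξ := by
  suffices Φ ∘ₗ Φ = -LinearMap.id + αE.smulRight ξ from LinearMap.congr_fun this v
  refine h.linearMap_ext (fun x => ?_) ?_
  · calc Φ (Φ (i x)) = i (J (J x)) - α (J (J x)) • ξ := by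
          rw [hΦ, map_sub, map_smul, hΦξ, smul_zero, sub_zero, hΦ]
      _ = -i x + αE (i x) • ξ := by
          rw [hJ, map_neg, map_neg, neg_smul, sub_neg_eq_add, hα]
  · calc Φ (Φ ξ) = 0 := by rw [hΦξ, map_zero]
      _ = -ξ + αE ξ • ξ := by rw [hαξ, one_smul, neg_add_cancel]

lemma kirillovForm_generator (h : IsExtensionBy D i ξ) (hα : ∀ x, αE (i x) = α x)
    (hαD : ∀ x, α (D x) = 0) : kirillovForm αE ξ = 0 := by
  refine h.linearMap_ext (fun x => ?_) (kirillovForm_isAlt αE ξ)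
  rw [kirillovForm_apply, h.lie_apply, hα, hαD, LinearMap.zero_apply]

lemma eq_smul_of_kirillovForm_eq_zero (h : IsExtensionBy D i ξ) (hα : ∀ x, αE (i x) = α x)
    (hαξ : αE ξ = 1) (hαD : ∀ x, α (D x) = 0) (hsep : (kirillovForm α).SeparatingLeft) {v : E}
    (hv : kirillovForm αE v = 0) : v = αE v • ξ := by
  obtain ⟨x, s, rfl⟩ := h.exists_eq_add_smul v
  have hx : x = 0 := hsep x fun y => by
    calc α ⁅x, y⁆ = kirillovForm αE (i x + s • ξ) (i y) := by
          rw [map_add, map_smul, h.kirillovForm_generator hα hαD, smul_zero, add_zero,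
            kirillovForm_apply, ← LieHom.map_lie, hα]
      _ = 0 := by rw [hv, LinearMap.zero_apply]
  rw [hx, map_zero, zero_add, map_smul, hαξ, smul_eq_mul, mul_one]

lemma eq_zero_of_kirillovForm_ker_eq_zero (h : IsExtensionBy D i ξ) (hα : ∀ x, αE (i x) = α x)
    (hαξ : αE ξ = 1) (hαD : ∀ x, α (D x) = 0) (hsep : (kirillovForm α).SeparatingLeft) {v : E}
    (hv : αE v = 0) (hker : ∀ w, αE w = 0 → kirillovForm αE v w = 0) : v = 0 := by
  have hvξ : kirillovForm αE v ξ = 0 := by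
    rw [(kirillovForm_isAlt αE).eq_iff, h.kirillovForm_generator hα hαD, LinearMap.zero_apply]
  have hrad : kirillovForm αE v = 0 := by
    ext w
    have hw : αE (w - αE w • ξ) = 0 := by simp [hαξ]
    simpa [hvξ] using hker _ hw
  rw [h.eq_smul_of_kirillovForm_eq_zero hα hαξ hαD hsep hrad, hv, zero_smul]

lemma nijenhuisTensor_map_map (h : IsExtensionBy D i ξ) (hαJD : ∀ x, α (J (D x)) = 0)
    (hDJ : ∀ x, D (J x) = J (D x)) (hΦ : ∀ x, Φ (i x) = i (J x) - α (J x) • ξ) (hΦξ : Φ ξ = 0)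
    (x y : G) :
    nijenhuisTensor Φ (i x) (i y) = i (nijenhuisTensor J x y)
      + (α ⁅J x, J y⁆ - α (nijenhuisTensor J x y)) • ξ := by
  have hΦD (z : G) : Φ (i (D z)) = i (D (J z)) := by rw [hΦ, hαJD, zero_smul, sub_zero, hDJ]
  have lie_ξ (z : G) : ⁅i z, ξ⁆ = -i (D z) := by rw [← lie_skew, h.lie_apply]
  have hΦΦ : Φ (Φ ⁅i x, i y⁆) = i (J (J ⁅x, y⁆)) - α (J (J ⁅x, y⁆)) • ξ := by
    rw [← LieHom.map_lie, hΦ, map_sub, map_smul, hΦξ, smul_zero, sub_zero, hΦ]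
  have hlie : ⁅Φ (i x), Φ (i y)⁆ =
      i ⁅J x, J y⁆ + α (J y) • i (D (J x)) - α (J x) • i (D (J y)) := by
    simp only [hΦ, sub_lie, lie_sub, smul_lie, lie_smul, lie_self, lie_ξ, h.lie_apply,
      LieHom.map_lie]
    module
  have hright : Φ ⁅i x, Φ (i y)⁆ =
      i (J ⁅x, J y⁆) - α (J ⁅x, J y⁆) • ξ + α (J y) • i (D (J x)) := by
    rw [hΦ y, lie_sub, lie_smul, lie_ξ, ← LieHom.map_lie, map_sub, map_smul, map_neg, hΦD, hΦ]
    module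
  have hleft : Φ ⁅Φ (i x), i y⁆ =
      i (J ⁅J x, y⁆) - α (J ⁅J x, y⁆) • ξ - α (J x) • i (D (J y)) := by
    rw [hΦ x, sub_lie, smul_lie, h.lie_apply, ← LieHom.map_lie, map_sub, map_smul, hΦD, hΦ]
  rw [nijenhuisTensor_apply, hΦΦ, hlie, hright, hleft, nijenhuisTensor_apply]
  simp only [map_add, map_sub]
  module

lemma nijenhuisTensor_generator (h : IsExtensionBy D i ξ) (hαJD : ∀ x, α (J (D x)) = 0)
    (hDJ : ∀ x, D (J x) = J (D x)) (hΦ : ∀ x, Φ (i x) = i (J x) - α (J x) • ξ) (hΦξ : Φ ξ = 0)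
    (x : G) : nijenhuisTensor Φ ξ (i x) = 0 := by
  have hcomm : Φ ⁅ξ, i x⁆ = ⁅ξ, Φ (i x)⁆ := by
    rw [h.lie_apply, hΦ, hΦ, hαJD, lie_sub, lie_smul, lie_self, h.lie_apply, hDJ, zero_smul,
      smul_zero]
  rw [nijenhuisTensor_apply, hcomm, hΦξ, zero_lie, zero_lie, map_zero, add_zero, sub_self, sub_zero]

lemma nijenhuisTensor_eq_smul_kirillovForm (h : IsExtensionBy D i ξ)
    (hNJ : ∀ x y, nijenhuisTensor J x y = 0)
    (hαJ : ∀ x y, kirillovForm α (J x) (J y) = kirillovForm α x y) (hαD : ∀ x, α (D x) = 0)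
    (hαJD : ∀ x, α (J (D x)) = 0) (hDJ : ∀ x, D (J x) = J (D x)) (hα : ∀ x, αE (i x) = α x)
    (hΦ : ∀ x, Φ (i x) = i (J x) - α (J x) • ξ) (hΦξ : Φ ξ = 0) :
    nijenhuisTensor Φ = (kirillovForm αE).compr₂ (LinearMap.toSpanSingleton R E ξ) := by
  refine h.isAlt_ext (nijenhuisTensor_isAlt Φ) (fun v => ?_) (fun x y => ?_) fun x => ?_
  · rw [LinearMap.compr₂_apply, kirillovForm_isAlt αE v, map_zero]
  · calc nijenhuisTensor Φ (i x) (i y) = α ⁅J x, J y⁆ • ξ := by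
          rw [h.nijenhuisTensor_map_map hαJD hDJ hΦ hΦξ, hNJ, map_zero, map_zero, zero_add,
            sub_zero]
      _ = αE ⁅i x, i y⁆ • ξ := by
          rw [← kirillovForm_apply, hαJ, kirillovForm_apply, ← LieHom.map_lie, hα]
  · rw [h.nijenhuisTensor_generator hαJD hDJ hΦ hΦξ, LinearMap.compr₂_apply,
      h.kirillovForm_generator hα hαD, LinearMap.zero_apply, map_zero]

end IsExtensionBy

theorem frobenius_kahler_extension_by_derivation_is_sasakian_general
    {R G E : Type*} [CommRing R] [LieRing G] [LieAlgebra R G] [LieRing E] [LieAlgebra R E]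
    {J D : G →ₗ[R] G} {α : G →ₗ[R] R} {i : G →ₗ⁅R⁆ E} {ξ : E} {αE : E →ₗ[R] R} {Φ : E →ₗ[R] E}
    (hJ : ∀ x, J (J x) = -x) (hNJ : ∀ x y, nijenhuisTensor J x y = 0)
    (hαJ : ∀ x y, kirillovForm α (J x) (J y) = kirillovForm α x y)
    (hsep : (kirillovForm α).SeparatingLeft)
    (hαD : ∀ x, α (D x) = 0) (hαJD : ∀ x, α (J (D x)) = 0) (hDJ : ∀ x, D (J x) = J (D x))
    (hE : IsExtensionBy D i ξ) (hα : ∀ x, αE (i x) = α x) (hαξ : αE ξ = 1)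
    (hΦ : ∀ x, Φ (i x) = i (J x) - α (J x) • ξ) (hΦξ : Φ ξ = 0) :
    (∀ v, Φ (Φ v) = -v + αE v • ξ) ∧
    (∀ u v, nijenhuisTensor Φ u v = αE ⁅u, v⁆ • ξ) ∧
    (∀ v, αE ⁅ξ, v⁆ = 0) ∧
    (∀ v, αE v = 0 → (∀ w, αE w = 0 → αE ⁅v, w⁆ = 0) → v = 0) :=
  ⟨hE.apply_apply_eq_neg_add_smul hJ hα hαξ hΦ hΦξ,
    LinearMap.congr_fun₂ (hE.nijenhuisTensor_eq_smul_kirillovForm hNJ hαJ hαD hαJD hDJ hα hΦ hΦξ),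
    LinearMap.congr_fun (hE.kirillovForm_generator hα hαD),
    fun _ => hE.eq_zero_of_kirillovForm_ker_eq_zero hα hαξ hαD hsep⟩

/-- Let `(g,J,ω,α)` be a Frobenius–Kähler structure on a real Lie algebra `G`
(`ω(x,y) = α([x,y]) = g(x,Jy)`), and let `D ∈ Der(G)` satisfy `α∘D = 0`, `α∘J∘D = 0`
and `D∘J = J∘D`.  On the extension `E = ℝξ ⋉ G` by `D`, with `ᾱ = α + ξ*` and
`Φ(x) = J(x) − α(J(x))ξ` on `G`, `Φ(ξ) = 0`, one has: `Φ∘Φ = −Id + ᾱ⊗ξ`,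
`N_Φ = −dᾱ⊗ξ`, `dᾱ(ξ,·) = 0`, and `dᾱ` is nondegenerate on `Ker ᾱ`; that is,
`(ξ, ᾱ, Φ)` is a Sasakian structure on `E`. -/
theorem frobenius_kahler_extension_by_derivation_is_sasakian
    {G E : Type*} [LieRing G] [LieAlgebra ℝ G] [LieRing E] [LieAlgebra ℝ E]
    -- the Frobenius–Kähler structure (g, J, ω, α) on G
    (g : G →ₗ[ℝ] G →ₗ[ℝ] ℝ) (J : G →ₗ[ℝ] G) (ω : G →ₗ[ℝ] G →ₗ[ℝ] ℝ) (α : G →ₗ[ℝ] ℝ)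
    (hg_symm : ∀ x y : G, g x y = g y x)
    (hg_pos : ∀ x : G, x ≠ 0 → 0 < g x x)
    (hJ2 : ∀ x : G, J (J x) = -x)
    (hgJ : ∀ x y : G, g (J x) y + g x (J y) = 0)
    (hNJ : ∀ x y : G, nijenhuis J x y = 0)
    (hωg : ∀ x y : G, ω x y = g x (J y))
    (hωα : ∀ x y : G, ω x y = α ⁅x, y⁆)
    -- the derivation D
    (D : G →ₗ[ℝ] G)
    (hDer : ∀ x y : G, D ⁅x, y⁆ = ⁅D x, y⁆ + ⁅x, D y⁆)
    (hαD : ∀ x : G, α (D x) = 0)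
    (hαJD : ∀ x : G, α (J (D x)) = 0)
    (hDJ : ∀ x : G, D (J x) = J (D x))
    -- E = ℝξ ⋉ G is the extension of G by D
    (i : G →ₗ[ℝ] E) (ξ : E)
    (hdecomp : ∀ v : E, ∃! p : G × ℝ, v = i p.1 + p.2 • ξ)
    (hbrG : ∀ x y : G, ⁅i x, i y⁆ = i ⁅x, y⁆)
    (hbrξ : ∀ x : G, ⁅ξ, i x⁆ = i (D x))
    -- ᾱ with ᾱ|_G = α and ᾱ(ξ) = 1
    (αE : E →ₗ[ℝ] ℝ) (hαE : ∀ x : G, αE (i x) = α x) (hαEξ : αE ξ = 1)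
    -- Φ(x) = J(x) − α(J(x))·ξ on G, Φ(ξ) = 0
    (Φ : E →ₗ[ℝ] E)
    (hΦ : ∀ x : G, Φ (i x) = i (J x) - α (J x) • ξ)
    (hΦξ : Φ ξ = 0) :
    -- (i)
    (∀ v : E, Φ (Φ v) = -v + αE v • ξ) ∧
    -- (ii) N_Φ = −dᾱ⊗ξ
    (∀ U V : E, nijenhuis Φ U V = αE ⁅U, V⁆ • ξ) ∧
    -- (iii) ᾱ is a contact form on E with Reeb vector ξ
    (∀ v : E, αE ⁅ξ, v⁆ = 0) ∧
    (∀ v : E, αE v = 0 → (∀ v' : E, αE v' = 0 → αE ⁅v, v'⁆ = 0) → v = 0) := by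
  let i' : G →ₗ⁅ℝ⁆ E := { i with map_lie' := fun {x y} => (hbrG x y).symm }
  have hE : IsExtensionBy D i' ξ := ⟨hdecomp, hbrξ⟩
  have hαg (x y : G) : kirillovForm α x y = g x (J y) := (hωα x y).symm.trans (hωg x y)
  have hαJ (x y : G) : kirillovForm α (J x) (J y) = kirillovForm α x y := by
    rw [hαg, hαg, map_map_eq_of_skew_of_sq_eq_neg hJ2 hgJ]
  have hg : g.SeparatingLeft := fun x hx => by_contra fun hne => (hg_pos x hne).ne' (hx x)
  have hsep : (kirillovForm α).SeparatingLeft := fun x hx =>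
    hg x fun y => by simpa [hαg, hJ2] using hx (J y)
  exact frobenius_kahler_extension_by_derivation_is_sasakian_general hJ2 hNJ hαJ hsep hαD hαJD hDJ
    hE hαE hαEξ hΦ hΦξ
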